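/- Under Assumptions 1, 2, 4, and 5, gradient descent on the empirical risk of a deep linear network satisfies: (i) sup_{t≥0} max_{1≤k≤L} ‖W_k(t)‖_F = ∞; (ii) ∑_{t=0}^∞ η_t = ∞; and (iii) for any R > 0, ∑_{t : W(t) ∈ B(R)} η_t < ∞. -/

import Mathlib

/-!
Write `‖·‖` for the Frobenius norm. The proof is the descent lemma together with a lower bound on
the gradient along the trajectory.

*Descent.* For a sample `z i` the margin `⟨w_prod, z i⟩` is multilinear in the layers. Exchanging the
layers of `W` for those of `W'` one at a time shows that, when all layers have norm at most `R`,
the margin changes by at most `R ^ (L - 1) * S` and differs from its linearisation by at most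
`R ^ (L - 1) * S ^ 2`, where `S = ∑ k, ‖W' k - W k‖` (`abs_out_sub_le`, `abs_out_sub_outDeriv_le`).
Combined with the Lipschitz bound on `ℓ'` this gives the quadratic upper bound `riskW_le` for the
risk. The step size makes the iterate stay in the ball of radius `Rseq t`, so each step lowers the
risk by at least `η t / 2` times the squared gradient norm (`riskW_step_le`). As the risk is
nonnegative, `∑ η t * gradNormSq (W t)` converges.

*Gradient lower bound.* The first step brings the risk strictly below `ℓ 0`, where it stays. Then
some margin is bounded below by a positive constant; on the ball of radius `R` this keeps the product
of the layers above the first away from zero, while separability keeps the gradient in the linear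
predictor away from zero. So the gradient norm is bounded below on the ball
(`exists_gradNormSq_lower_bound`), and the step sizes spent in the ball are summable.

*Conclusion.* If the iterates were bounded, `Rseq` would be bounded, the step sizes would be bounded
below, and they would all be spent in one ball: a contradiction. If the step sizes were summable,
then `∑ η t * (1 + gradNormSq (W t))` would be finite; it dominates the length of the path, so the
iterates would be bounded, again a contradiction.
-/

open Matrix Filter
open scoped BigOperators

noncomputable section

/-- Euclidean norm of a vector in `ℝ^m`. -/
def vecNorm {m : Type*} [Fintype m] (v : m → ℝ) : ℝ :=
  Real.sqrt (∑ i, (v i) ^ 2)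

/-- Frobenius norm of a real matrix. -/
def frobNorm {m n : Type*} [Fintype m] [Fintype n] (M : Matrix m n ℝ) : ℝ :=
  Real.sqrt (∑ i, ∑ j, (M i j) ^ 2)

/-- Spectral norm (operator 2-norm) of a real matrix. -/
def specNorm {m n : Type*} [Fintype m] [Fintype n] (M : Matrix m n ℝ) : ℝ :=
  sSup {c : ℝ | ∃ v : n → ℝ, vecNorm v = 1 ∧ c = vecNorm (M.mulVec v)}

/-- `(u, v)` is a top singular vector pair of `M`: both are unit vectors,
`M v = ‖M‖₂ u` and `Mᵀ u = ‖M‖₂ v`. -/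
def IsTopSingularPair {m n : Type*} [Fintype m] [Fintype n]
    (M : Matrix m n ℝ) (u : m → ℝ) (v : n → ℝ) : Prop :=
  vecNorm u = 1 ∧ vecNorm v = 1 ∧
    M.mulVec v = specNorm M • u ∧ Mᵀ.mulVec u = specNorm M • v

/-- Parameters of a deep linear network: layer `k` (0-indexed; paper layer `k+1`)
is a matrix mapping `ℝ^{dim k}` to `ℝ^{dim (k+1)}`. -/
abbrev Layers (dim : ℕ → ℕ) := ∀ j : ℕ, Matrix (Fin (dim (j+1))) (Fin (dim j)) ℝ

/-- Product `W_{j-1} ⋯ W_0` of the bottom `j` layers (paper: `W_j ⋯ W_1`). -/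
def prodUpTo {dim : ℕ → ℕ} (W : Layers dim) : ∀ j : ℕ, Matrix (Fin (dim j)) (Fin (dim 0)) ℝ
  | 0 => 1
  | (j+1) => W j * prodUpTo W j

/-- Product `W_{L-1} ⋯ W_j` of the layers from `j` up to the top layer `L-1`
(paper: `W_L ⋯ W_{j+1}`); for `j ≥ L` it is a pseudo-identity. -/
def prodFrom {dim : ℕ → ℕ} (L : ℕ) (W : Layers dim) (j : ℕ) :
    Matrix (Fin (dim L)) (Fin (dim j)) ℝ :=
  if h : j < L then prodFrom L W (j+1) * W j
  else Matrix.of fun i j' => if (i : ℕ) = (j' : ℕ) then 1 else 0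
  termination_by L - j
  decreasing_by omega

/-- The linear predictor `w_prod = (W_L ⋯ W_1)ᵀ ∈ ℝ^d` induced by the network
(recall `dim L = 1`). -/
def wprod {dim : ℕ → ℕ} (L : ℕ) (W : Layers dim) : Fin (dim 0) → ℝ :=
  fun j => ∑ a, prodUpTo W L a j

/-- Empirical risk of a linear predictor `w`: `R(w) = (1/n) ∑ᵢ ℓ(⟨w, zᵢ⟩)`. -/
def riskV {n d : ℕ} (ℓ : ℝ → ℝ) (z : Fin n → Fin d → ℝ) (w : Fin d → ℝ) : ℝ :=
  (n : ℝ)⁻¹ * ∑ i, ℓ (w ⬝ᵥ z i)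

/-- Gradient of the risk w.r.t. the linear predictor: `∇R(w) = (1/n) ∑ᵢ ℓ'(⟨w, zᵢ⟩) zᵢ`. -/
def gradRiskV {n d : ℕ} (ℓ' : ℝ → ℝ) (z : Fin n → Fin d → ℝ) (w : Fin d → ℝ) :
    Fin d → ℝ :=
  (n : ℝ)⁻¹ • ∑ i, ℓ' (w ⬝ᵥ z i) • z i

/-- The partial gradient of the empirical risk with respect to layer `k`:
`∂R/∂W_k = (W_L ⋯ W_{k+1})ᵀ ∇R(w_prod)ᵀ (W_{k-1} ⋯ W_1)ᵀ`. -/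
def gradLayer {dim : ℕ → ℕ} (L : ℕ) (ℓ' : ℝ → ℝ) {n : ℕ}
    (z : Fin n → Fin (dim 0) → ℝ) (W : Layers dim) (k : ℕ) :
    Matrix (Fin (dim (k+1))) (Fin (dim k)) ℝ :=
  (prodFrom L W (k+1))ᵀ *
    (Matrix.of fun (_ : Fin (dim L)) (j : Fin (dim 0)) => gradRiskV ℓ' z (wprod L W) j) *
    (prodUpTo W k)ᵀ

/-- Empirical risk of the network. -/
def riskW {dim : ℕ → ℕ} (L : ℕ) (ℓ : ℝ → ℝ) {n : ℕ}
    (z : Fin n → Fin (dim 0) → ℝ) (W : Layers dim) : ℝ :=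
  riskV ℓ z (wprod L W)

/-- Gradient flow: `dW(t)/dt = −∇R(W(t))` for all `t ≥ 0`, entrywise on each layer. -/
def IsGradientFlow {dim : ℕ → ℕ} (L : ℕ) (ℓ' : ℝ → ℝ) {n : ℕ}
    (z : Fin n → Fin (dim 0) → ℝ) (W : ℝ → Layers dim) : Prop :=
  ∀ t : ℝ, 0 ≤ t → ∀ k < L, ∀ i j,
    HasDerivAt (fun s => W s k i j) (-(gradLayer L ℓ' z (W t) k i j)) t

/-- The initialization-dependent constant `D`. -/
def Dconst {dim : ℕ → ℕ} (L : ℕ) (W0 : Layers dim) : ℝ :=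
  (⨆ k : Fin L, frobNorm (W0 k) ^ 2) - frobNorm (W0 (L-1)) ^ 2
    + ∑ k ∈ Finset.range (L-1),
        specNorm (W0 k * (W0 k)ᵀ - (W0 (k+1))ᵀ * W0 (k+1))

/-- Euclidean norm of a parameter tuple (all entries of the first `L` layers concatenated). -/
def paramNorm {dim : ℕ → ℕ} (L : ℕ) (V : Layers dim) : ℝ :=
  Real.sqrt (∑ k ∈ Finset.range L, frobNorm (V k) ^ 2)

/-- Squared Euclidean norm of the full gradient `∇R(W)`. -/
def gradNormSq {dim : ℕ → ℕ} (L : ℕ) (ℓ' : ℝ → ℝ) {n : ℕ}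
    (z : Fin n → Fin (dim 0) → ℝ) (W : Layers dim) : ℝ :=
  ∑ k ∈ Finset.range L, frobNorm (gradLayer L ℓ' z W k) ^ 2

/-- The data-dependent constant `α = min_{‖ξ‖=1, ξ ⟂ ū} max_{i ∈ S} ⟨ξ, zᵢ⟩`,
where `S` is the set of support vectors. -/
def alphaConst {n d : ℕ} (z : Fin n → Fin d → ℝ) (ubar : Fin d → ℝ) (γ : ℝ) : ℝ :=
  sInf {c : ℝ | ∃ ξ : Fin d → ℝ, vecNorm ξ = 1 ∧ ξ ⬝ᵥ ubar = 0 ∧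
    c = sSup {r : ℝ | ∃ i : Fin n, ubar ⬝ᵥ z i = γ ∧ r = ξ ⬝ᵥ z i}}

/-- Orthogonal projection onto the orthogonal complement of `span(ū)` (for `ū` a unit vector). -/
def projPerp {d : ℕ} (ubar : Fin d → ℝ) (w : Fin d → ℝ) : Fin d → ℝ :=
  w - (w ⬝ᵥ ubar) • ubar

/-! ### Frobenius norm -/

section Frobenius

attribute [local instance] Matrix.frobeniusNormedAddCommGroup Matrix.frobeniusNormedSpace

lemma frobNorm_eq_norm {m n : Type*} [Fintype m] [Fintype n] (M : Matrix m n ℝ) :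
    frobNorm M = ‖M‖ := by
  rw [Matrix.frobenius_norm_def, frobNorm, Real.sqrt_eq_rpow]
  simp [sq_abs]

lemma frobNorm_mul_le {l m n : Type*} [Fintype l] [Fintype m] [Fintype n]
    (A : Matrix l m ℝ) (B : Matrix m n ℝ) :
    frobNorm (A * B) ≤ frobNorm A * frobNorm B := by
  simpa only [frobNorm_eq_norm] using Matrix.frobenius_norm_mul A B

lemma frobNorm_add_le {m n : Type*} [Fintype m] [Fintype n] (A B : Matrix m n ℝ) :
    frobNorm (A + B) ≤ frobNorm A + frobNorm B := by
  simpa only [frobNorm_eq_norm] using norm_add_le A B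

lemma frobNorm_sum_le {m n ι : Type*} [Fintype m] [Fintype n] (s : Finset ι)
    (A : ι → Matrix m n ℝ) : frobNorm (∑ i ∈ s, A i) ≤ ∑ i ∈ s, frobNorm (A i) := by
  simpa only [frobNorm_eq_norm] using norm_sum_le s A

lemma frobNorm_smul {m n : Type*} [Fintype m] [Fintype n] (c : ℝ) (A : Matrix m n ℝ) :
    frobNorm (c • A) = |c| * frobNorm A := by
  simpa only [frobNorm_eq_norm, Real.norm_eq_abs] using norm_smul c A

lemma frobNorm_transpose {m n : Type*} [Fintype m] [Fintype n] (A : Matrix m n ℝ) :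
    frobNorm Aᵀ = frobNorm A := by
  simpa only [frobNorm_eq_norm] using Matrix.frobenius_norm_transpose A

end Frobenius

lemma frobNorm_nonneg {m n : Type*} [Fintype m] [Fintype n] (M : Matrix m n ℝ) :
    0 ≤ frobNorm M := Real.sqrt_nonneg _

lemma frobNorm_sq {m n : Type*} [Fintype m] [Fintype n] (M : Matrix m n ℝ) :
    frobNorm M ^ 2 = ∑ i, ∑ j, M i j ^ 2 :=
  Real.sq_sqrt (Finset.sum_nonneg fun _ _ => Finset.sum_nonneg fun _ _ => sq_nonneg _)

lemma frobNorm_pos {m n : Type*} [Fintype m] [Fintype n] {M : Matrix m n ℝ} (hM : M ≠ 0) :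
    0 < frobNorm M := by
  rw [frobNorm_eq_norm]
  let _ := Matrix.frobeniusNormedAddCommGroup (m := m) (n := n) (α := ℝ)
  exact norm_pos_iff.mpr hM

/-- On `1 × 1` matrices the trace is the only entry, so it is bounded by the Frobenius norm. -/
lemma abs_trace_le_frobNorm {m : Type*} [Fintype m] [Unique m] (M : Matrix m m ℝ) :
    |M.trace| ≤ frobNorm M := by
  simp [Matrix.trace, frobNorm, Real.sqrt_sq_eq_abs]

/-- The vector `v` as a matrix all of whose columns, indexed by `m`, equal `v`. Here `m` is the
one-point index set of the network output, which makes this a single column. -/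
def colMat {d m : Type*} (v : d → ℝ) : Matrix d m ℝ := Matrix.of fun j _ => v j

lemma frobNorm_colMat {d m : Type*} [Fintype d] [Fintype m] [Unique m] (v : d → ℝ) :
    frobNorm (colMat v : Matrix d m ℝ) = vecNorm v := by
  simp [frobNorm, vecNorm, colMat]

/-! ### The network output as a function of the layers -/

section Network

variable {dim : ℕ → ℕ} {L : ℕ}

lemma prodFrom_of_lt (W : Layers dim) {j : ℕ} (h : j < L) :
    prodFrom L W j = prodFrom L W (j + 1) * W j := by
  rw [prodFrom, dif_pos h]

lemma prodFrom_self (W : Layers dim) : prodFrom L W L = 1 := by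
  rw [prodFrom, dif_neg (lt_irrefl L)]
  ext i j
  simp [Matrix.one_apply, Fin.ext_iff]

lemma prodFrom_mul_prodUpTo (W : Layers dim) {j : ℕ} (h : j ≤ L) :
    prodFrom L W j * prodUpTo W j = prodUpTo W L := by
  induction h using Nat.decreasingInduction with
  | self => rw [prodFrom_self, Matrix.one_mul]
  | of_succ k hk ih => rw [← ih, prodFrom_of_lt W hk, prodUpTo, Matrix.mul_assoc]

lemma wprod_dotProduct (W : Layers dim) (v : Fin (dim 0) → ℝ) :
    wprod L W ⬝ᵥ v = (prodUpTo W L * colMat v).trace := by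
  simp only [wprod, dotProduct, Matrix.trace, Matrix.diag, Matrix.mul_apply, colMat, Matrix.of_apply,
    Finset.sum_mul]
  exact Finset.sum_comm

/-- Replacing the layers of `W` by those of `W'` one at a time, from the bottom up, gives a
telescoping formula for the change of the product matrix. -/
lemma prodUpTo_sub (W W' : Layers dim) :
    prodUpTo W' L - prodUpTo W L =
      ∑ k ∈ Finset.range L, prodFrom L W (k + 1) * (W' k - W k) * prodUpTo W' k := by
  have h : ∀ k ∈ Finset.range L, prodFrom L W (k + 1) * (W' k - W k) * prodUpTo W' k =
      prodFrom L W (k + 1) * prodUpTo W' (k + 1) - prodFrom L W k * prodUpTo W' k := by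
    intro k hk
    rw [prodFrom_of_lt W (Finset.mem_range.mp hk), prodUpTo]
    simp only [Matrix.mul_sub, Matrix.sub_mul, Matrix.mul_assoc]
  rw [Finset.sum_congr rfl h, Finset.sum_range_sub (fun k => prodFrom L W k * prodUpTo W' k),
    prodFrom_self, Matrix.one_mul]
  have := prodFrom_mul_prodUpTo W (Nat.zero_le L)
  rw [← this]
  rfl

lemma frobNorm_prodFrom_le [Unique (Fin (dim L))] (W : Layers dim) {R : ℝ} (hR : 0 ≤ R)
    (hW : ∀ k < L, frobNorm (W k) ≤ R) {j : ℕ} (h : j ≤ L) :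
    frobNorm (prodFrom L W j) ≤ R ^ (L - j) := by
  induction h using Nat.decreasingInduction with
  | self => simp [prodFrom_self, frobNorm]
  | of_succ k hk ih =>
    rw [prodFrom_of_lt W hk, show L - k = (L - (k + 1)) + 1 by omega, pow_succ]
    exact (frobNorm_mul_le _ _).trans
      (mul_le_mul ih (hW k hk) (frobNorm_nonneg _) (by positivity))

lemma frobNorm_prodUpTo_mul_le {q : Type*} [Fintype q] (W : Layers dim) {R : ℝ} (hR : 0 ≤ R)
    (hW : ∀ k < L, frobNorm (W k) ≤ R) (Z : Matrix (Fin (dim 0)) q ℝ) {k : ℕ} (hk : k ≤ L) :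
    frobNorm (prodUpTo W k * Z) ≤ R ^ k * frobNorm Z := by
  induction k with
  | zero => simp [prodUpTo]
  | succ k ih =>
    rw [prodUpTo, Matrix.mul_assoc, pow_succ', mul_assoc]
    exact (frobNorm_mul_le _ _).trans
      (mul_le_mul (hW k hk) (ih (by omega)) (frobNorm_nonneg _) hR)

lemma frobNorm_prodUpTo_sub_mul_le {q : Type*} [Fintype q] (W W' : Layers dim) {R : ℝ}
    (hR : 1 ≤ R) (hW : ∀ k < L, frobNorm (W k) ≤ R) (hW' : ∀ k < L, frobNorm (W' k) ≤ R)
    (Z : Matrix (Fin (dim 0)) q ℝ) {k : ℕ} (hk : k ≤ L) :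
    frobNorm ((prodUpTo W' k - prodUpTo W k) * Z) ≤
      R ^ k * (∑ j ∈ Finset.range k, frobNorm (W' j - W j)) * frobNorm Z := by
  have hR0 : 0 ≤ R := by linarith
  induction k with
  | zero => simp [prodUpTo, frobNorm]
  | succ k ih =>
    have e : (prodUpTo W' (k + 1) - prodUpTo W (k + 1)) * Z =
        W' k * ((prodUpTo W' k - prodUpTo W k) * Z) + (W' k - W k) * (prodUpTo W k * Z) := by
      simp only [prodUpTo, Matrix.mul_sub, Matrix.sub_mul, Matrix.mul_assoc]
      abel
    have h1 : frobNorm (W' k * ((prodUpTo W' k - prodUpTo W k) * Z)) ≤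
        R * (R ^ k * (∑ j ∈ Finset.range k, frobNorm (W' j - W j)) * frobNorm Z) :=
      (frobNorm_mul_le _ _).trans
        (mul_le_mul (hW' k hk) (ih (by omega)) (frobNorm_nonneg _) hR0)
    have h2 : frobNorm ((W' k - W k) * (prodUpTo W k * Z)) ≤
        frobNorm (W' k - W k) * (R ^ (k + 1) * frobNorm Z) := by
      refine (frobNorm_mul_le _ _).trans (mul_le_mul_of_nonneg_left ?_ (frobNorm_nonneg _))
      refine (frobNorm_prodUpTo_mul_le W hR0 hW Z (by omega : k ≤ L)).trans ?_
      exact mul_le_mul_of_nonneg_right (pow_le_pow_right₀ hR (by omega)) (frobNorm_nonneg _)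
    rw [e, Finset.sum_range_succ]
    refine (frobNorm_add_le _ _).trans ((add_le_add h1 h2).trans (le_of_eq ?_))
    ring

/-- One summand of the telescoping formula: the layers other than `k` contribute `L - 1` factors
`R`, whatever layers enter below `k`, as recorded by the hypothesis on `X`. -/
lemma frobNorm_sandwich_le [Unique (Fin (dim L))] (W : Layers dim) {R : ℝ} (hR : 0 ≤ R)
    (hW : ∀ k < L, frobNorm (W k) ≤ R) {k : ℕ} (hk : k < L)
    (V : Matrix (Fin (dim (k + 1))) (Fin (dim k)) ℝ) {q : Type*} [Fintype q]
    (X : Matrix (Fin (dim k)) q ℝ) {c : ℝ} (hX : frobNorm X ≤ R ^ k * c) :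
    frobNorm (prodFrom L W (k + 1) * V * X) ≤ R ^ (L - 1) * frobNorm V * c := by
  have h1 := frobNorm_prodFrom_le W hR hW (j := k + 1) hk
  have hp : R ^ (L - 1) = R ^ (L - (k + 1)) * R ^ k := by
    rw [← pow_add]; congr 1; omega
  calc frobNorm (prodFrom L W (k + 1) * V * X)
      ≤ frobNorm (prodFrom L W (k + 1) * V) * frobNorm X := frobNorm_mul_le _ _
    _ ≤ (R ^ (L - (k + 1)) * frobNorm V) * (R ^ k * c) := by
        refine mul_le_mul ((frobNorm_mul_le _ _).trans
          (mul_le_mul_of_nonneg_right h1 (frobNorm_nonneg _))) hX (frobNorm_nonneg _) ?_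
        exact mul_nonneg (by positivity) (frobNorm_nonneg _)
    _ = R ^ (L - 1) * frobNorm V * c := by rw [hp]; ring

/-- The directional derivative at `W`, in direction `V`, of the network output `⟨w_prod, v⟩`. -/
def outDeriv (L : ℕ) (W V : Layers dim) (v : Fin (dim 0) → ℝ) : ℝ :=
  ∑ k ∈ Finset.range L, (prodFrom L W (k + 1) * V k * (prodUpTo W k * colMat v)).trace

lemma abs_out_sub_le [Unique (Fin (dim L))] (W W' : Layers dim) {R : ℝ} (hR : 0 ≤ R)
    (hW : ∀ k < L, frobNorm (W k) ≤ R) (hW' : ∀ k < L, frobNorm (W' k) ≤ R)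
    {v : Fin (dim 0) → ℝ} (hv : vecNorm v ≤ 1) :
    |wprod L W' ⬝ᵥ v - wprod L W ⬝ᵥ v| ≤
      R ^ (L - 1) * ∑ k ∈ Finset.range L, frobNorm (W' k - W k) := by
  rw [wprod_dotProduct, wprod_dotProduct, ← Matrix.trace_sub, ← Matrix.sub_mul, prodUpTo_sub,
    Matrix.sum_mul, Matrix.trace_sum, Finset.mul_sum]
  refine (Finset.abs_sum_le_sum_abs _ _).trans (Finset.sum_le_sum fun k hk => ?_)
  have hk := Finset.mem_range.mp hk
  refine (abs_trace_le_frobNorm _).trans ?_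
  rw [Matrix.mul_assoc]
  refine (frobNorm_sandwich_le W hR hW hk _ _ (c := 1) ?_).trans_eq (mul_one _)
  refine (frobNorm_prodUpTo_mul_le W' hR hW' _ hk.le).trans ?_
  rw [frobNorm_colMat]
  gcongr

/-- The first-order Taylor remainder of the network output is quadratic in the step. -/
lemma abs_out_sub_outDeriv_le [Unique (Fin (dim L))] (W W' : Layers dim) {R : ℝ} (hR : 1 ≤ R)
    (hW : ∀ k < L, frobNorm (W k) ≤ R) (hW' : ∀ k < L, frobNorm (W' k) ≤ R)
    {v : Fin (dim 0) → ℝ} (hv : vecNorm v ≤ 1) :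
    |wprod L W' ⬝ᵥ v - wprod L W ⬝ᵥ v - outDeriv L W (fun k => W' k - W k) v| ≤
      R ^ (L - 1) * (∑ k ∈ Finset.range L, frobNorm (W' k - W k)) ^ 2 := by
  have hR0 : 0 ≤ R := by linarith
  rw [wprod_dotProduct, wprod_dotProduct, ← Matrix.trace_sub, ← Matrix.sub_mul, prodUpTo_sub,
    Matrix.sum_mul, Matrix.trace_sum, outDeriv, ← Finset.sum_sub_distrib]
  set S := ∑ k ∈ Finset.range L, frobNorm (W' k - W k) with hS
  have hSn : 0 ≤ S := Finset.sum_nonneg fun _ _ => frobNorm_nonneg _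
  rw [show R ^ (L - 1) * S ^ 2 = ∑ k ∈ Finset.range L, R ^ (L - 1) * frobNorm (W' k - W k) * S by
    rw [← Finset.sum_mul, ← Finset.mul_sum]; ring]
  refine (Finset.abs_sum_le_sum_abs _ _).trans (Finset.sum_le_sum fun k hk => ?_)
  have hk := Finset.mem_range.mp hk
  rw [Matrix.mul_assoc, ← Matrix.trace_sub, ← Matrix.mul_sub, ← Matrix.sub_mul]
  refine (abs_trace_le_frobNorm _).trans (frobNorm_sandwich_le W hR0 hW hk _ _ ?_)
  refine (frobNorm_prodUpTo_sub_mul_le W W' hR hW hW' _ hk.le).trans ?_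
  rw [frobNorm_colMat]
  have h1 : ∑ j ∈ Finset.range k, frobNorm (W' j - W j) ≤ S :=
    Finset.sum_le_sum_of_subset_of_nonneg (Finset.range_subset_range.mpr hk.le)
      fun _ _ _ => frobNorm_nonneg _
  have h0 : 0 ≤ vecNorm v := Real.sqrt_nonneg _
  calc _ ≤ R ^ k * S * 1 := by gcongr
    _ = _ := mul_one _

end Network

/-! ### Smoothness and gradient lower bound of the risk -/

section Risk

variable {dim : ℕ → ℕ} {L n : ℕ} {z : Fin n → Fin (dim 0) → ℝ} {ℓ ℓ' : ℝ → ℝ}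

/-- The Frobenius inner product of the layer gradient with `V` is the average, weighted by `ℓ'` at
the margins, of the derivatives of the margins in the direction `V` of layer `k`. -/
lemma sum_gradLayer_mul (W : Layers dim) (k : ℕ)
    (V : Matrix (Fin (dim (k + 1))) (Fin (dim k)) ℝ) :
    ∑ a, ∑ b, gradLayer L ℓ' z W k a b * V a b =
      (n : ℝ)⁻¹ * ∑ i, ℓ' (wprod L W ⬝ᵥ z i) *
        (prodFrom L W (k + 1) * V * (prodUpTo W k * colMat (z i))).trace := by
  have hcol : (colMat (gradRiskV ℓ' z (wprod L W)) : Matrix (Fin (dim 0)) (Fin (dim L)) ℝ) =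
      (n : ℝ)⁻¹ • ∑ i, ℓ' (wprod L W ⬝ᵥ z i) • colMat (z i) := by
    ext a b
    simp [colMat, gradRiskV, Matrix.sum_apply]
  have htr : ∑ a, ∑ b, gradLayer L ℓ' z W k a b * V a b =
      ((gradLayer L ℓ' z W k)ᵀ * V).trace := by
    simp only [Matrix.trace, Matrix.diag, Matrix.mul_apply, Matrix.transpose_apply]
    exact Finset.sum_comm
  have hg : (gradLayer L ℓ' z W k)ᵀ = (prodUpTo W k *
      (colMat (gradRiskV ℓ' z (wprod L W)) : Matrix (Fin (dim 0)) (Fin (dim L)) ℝ)) *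
        prodFrom L W (k + 1) := by
    rw [gradLayer, Matrix.transpose_mul, Matrix.transpose_mul, Matrix.transpose_transpose,
      Matrix.transpose_transpose, Matrix.mul_assoc]
    rfl
  rw [htr, hg, Matrix.mul_assoc, Matrix.trace_mul_comm, hcol]
  simp only [Matrix.mul_smul, Matrix.mul_sum, Matrix.trace_smul, Matrix.trace_sum, smul_eq_mul]

lemma frobNorm_gradLayer_le [Unique (Fin (dim L))] (hn : 0 < n) (hzn : ∀ i, vecNorm (z i) ≤ 1)
    {G : ℝ} (hG : ∀ a, |ℓ' a| ≤ G) (W : Layers dim) {R : ℝ} (hR : 0 ≤ R)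
    (hW : ∀ k < L, frobNorm (W k) ≤ R) {k : ℕ} (hk : k < L) :
    frobNorm (gradLayer L ℓ' z W k) ≤ R ^ (L - 1) * G := by
  have hn' : (0 : ℝ) < n := by exact_mod_cast hn
  have hcol : (colMat (gradRiskV ℓ' z (wprod L W)) : Matrix (Fin (dim 0)) (Fin (dim L)) ℝ) =
      (n : ℝ)⁻¹ • ∑ i, ℓ' (wprod L W ⬝ᵥ z i) • colMat (z i) := by
    ext a b
    simp [colMat, gradRiskV, Matrix.sum_apply]
  have hgn : frobNorm (colMat (gradRiskV ℓ' z (wprod L W)) :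
      Matrix (Fin (dim 0)) (Fin (dim L)) ℝ) ≤ G := by
    rw [hcol, frobNorm_smul, abs_of_pos (inv_pos.mpr hn'), inv_mul_le_iff₀ hn']
    refine (frobNorm_sum_le _ _).trans ?_
    have : ∀ i ∈ (Finset.univ : Finset (Fin n)), frobNorm (ℓ' (wprod L W ⬝ᵥ z i) •
        (colMat (z i) : Matrix (Fin (dim 0)) (Fin (dim L)) ℝ)) ≤ G := by
      intro i _
      rw [frobNorm_smul, frobNorm_colMat]
      have h0 : 0 ≤ vecNorm (z i) := Real.sqrt_nonneg _
      have := mul_le_mul (hG (wprod L W ⬝ᵥ z i)) (hzn i) h0 ((abs_nonneg _).trans (hG 0))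
      linarith
    refine (Finset.sum_le_sum this).trans_eq ?_
    simp
  have hp : R ^ (L - 1) = R ^ (L - (k + 1)) * R ^ k := by
    rw [← pow_add]; congr 1; omega
  rw [gradLayer, Matrix.mul_assoc, ← frobNorm_transpose, Matrix.transpose_mul,
    Matrix.transpose_transpose, Matrix.transpose_mul, Matrix.transpose_transpose]
  have h1 := frobNorm_prodFrom_le W hR hW (j := k + 1) hk
  have h2 : frobNorm (prodUpTo W k * (Matrix.of fun (_ : Fin (dim L)) (j : Fin (dim 0)) =>
      gradRiskV ℓ' z (wprod L W) j)ᵀ) ≤ R ^ k * G :=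
    (frobNorm_prodUpTo_mul_le W hR hW (colMat _) hk.le).trans (by gcongr)
  have hG0 : 0 ≤ G := (abs_nonneg _).trans (hG 0)
  refine (frobNorm_mul_le _ _).trans ((mul_le_mul h2 h1 (frobNorm_nonneg _)
    (by positivity)).trans_eq ?_)
  rw [hp]; ring

/-- A quadratic upper bound for a function whose derivative is `β`-Lipschitz (with the
non-optimal constant `β` in place of `β / 2`, which is enough here). -/
lemma loss_quadratic_bound (hderiv : ∀ s, HasDerivAt ℓ (ℓ' s) s) {β : ℝ} (hβ0 : 0 ≤ β)
    (hβ : ∀ a b, |ℓ' a - ℓ' b| ≤ β * |a - b|) (a b : ℝ) :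
    ℓ b ≤ ℓ a + ℓ' a * (b - a) + β * |b - a| ^ 2 := by
  obtain ⟨c, hc, he⟩ : ∃ c, |c - a| ≤ |b - a| ∧ ℓ b - ℓ a = ℓ' c * (b - a) := by
    have hcont : Continuous ℓ :=
      continuous_iff_continuousAt.mpr fun s => (hderiv s).continuousAt
    rcases lt_trichotomy a b with h | h | h
    · obtain ⟨c, hc, he⟩ := exists_hasDerivAt_eq_slope ℓ ℓ' h hcont.continuousOn
        fun s _ => hderiv s
      refine ⟨c, ?_, ?_⟩
      · rw [abs_of_pos (by linarith [hc.1]), abs_of_pos (by linarith)]; linarith [hc.2]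
      · rw [he]; field_simp [show b - a ≠ 0 by linarith]
    · exact ⟨a, by simp [h], by simp [h]⟩
    · obtain ⟨c, hc, he⟩ := exists_hasDerivAt_eq_slope ℓ ℓ' h hcont.continuousOn
        fun s _ => hderiv s
      refine ⟨c, ?_, ?_⟩
      · rw [abs_of_neg (by linarith [hc.2]), abs_of_neg (by linarith)]; linarith [hc.1]
      · have : a - b ≠ 0 := by linarith
        rw [he]; field_simp; ring
  have h1 : (ℓ' c - ℓ' a) * (b - a) ≤ β * |b - a| ^ 2 := by
    calc (ℓ' c - ℓ' a) * (b - a) ≤ |ℓ' c - ℓ' a| * |b - a| := by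
          rw [← abs_mul]; exact le_abs_self _
      _ ≤ (β * |b - a|) * |b - a| := by
          gcongr
          exact (hβ c a).trans (by gcongr)
      _ = _ := by ring
  nlinarith

/-- Smoothness of the risk on a Frobenius ball: first-order expansion with quadratic remainder. -/
lemma riskW_le [Unique (Fin (dim L))] (hn : 0 < n) (hzn : ∀ i, vecNorm (z i) ≤ 1)
    (hderiv : ∀ s, HasDerivAt ℓ (ℓ' s) s) {β G : ℝ} (hβ0 : 0 ≤ β)
    (hβ : ∀ a b, |ℓ' a - ℓ' b| ≤ β * |a - b|) (hG : ∀ a, |ℓ' a| ≤ G)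
    (W W' : Layers dim) {R : ℝ} (hR : 1 ≤ R)
    (hW : ∀ k < L, frobNorm (W k) ≤ R) (hW' : ∀ k < L, frobNorm (W' k) ≤ R) :
    riskW L ℓ z W' ≤ riskW L ℓ z W
      + ∑ k ∈ Finset.range L, ∑ a, ∑ b, gradLayer L ℓ' z W k a b * (W' k - W k) a b
      + R ^ (2 * L - 2) * (β + G) * (∑ k ∈ Finset.range L, frobNorm (W' k - W k)) ^ 2 := by
  have hn' : (0 : ℝ) < n := by exact_mod_cast hn
  set S := ∑ k ∈ Finset.range L, frobNorm (W' k - W k) with hS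
  have hSn : 0 ≤ S := Finset.sum_nonneg fun _ _ => frobNorm_nonneg _
  have hG0 : 0 ≤ G := (abs_nonneg _).trans (hG 0)
  have hlin : ∑ k ∈ Finset.range L, ∑ a, ∑ b, gradLayer L ℓ' z W k a b * (W' k - W k) a b =
      (n : ℝ)⁻¹ * ∑ i, ℓ' (wprod L W ⬝ᵥ z i) * outDeriv L W (fun k => W' k - W k) (z i) := by
    simp only [sum_gradLayer_mul, outDeriv, Finset.mul_sum]
    rw [Finset.sum_comm]
  have hpow : R ^ (2 * L - 2) = R ^ (L - 1) * R ^ (L - 1) := by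
    rw [← pow_add]; congr 1; omega
  have hq : 1 ≤ R ^ (L - 1) := one_le_pow₀ hR
  have hi : ∀ i, ℓ (wprod L W' ⬝ᵥ z i) ≤ ℓ (wprod L W ⬝ᵥ z i)
      + ℓ' (wprod L W ⬝ᵥ z i) * outDeriv L W (fun k => W' k - W k) (z i)
      + R ^ (2 * L - 2) * (β + G) * S ^ 2 := by
    intro i
    have h1 := abs_out_sub_le W W' (by linarith) hW hW' (hzn i)
    have h2 := abs_out_sub_outDeriv_le W W' hR hW hW' (hzn i)
    have h3 := loss_quadratic_bound hderiv hβ0 hβ (wprod L W ⬝ᵥ z i) (wprod L W' ⬝ᵥ z i)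
    rw [← hS] at h1 h2
    set p := wprod L W ⬝ᵥ z i
    set p' := wprod L W' ⬝ᵥ z i
    set D := outDeriv L W (fun k => W' k - W k) (z i)
    set q := R ^ (L - 1)
    have h4 : ℓ' p * (p' - p - D) ≤ G * (q * S ^ 2) := by
      refine (le_abs_self _).trans ?_
      rw [abs_mul]
      exact mul_le_mul (hG p) h2 (abs_nonneg _) hG0
    have h5 : β * |p' - p| ^ 2 ≤ β * (q * S) ^ 2 := by gcongr
    have h6 : G * (q * S ^ 2) ≤ G * (q * q * S ^ 2) := by
      gcongr
      nlinarith
    rw [hpow]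
    linarith
  rw [hlin]
  unfold riskW riskV
  have hsum := Finset.sum_le_sum fun i (_ : i ∈ (Finset.univ : Finset (Fin n))) => hi i
  rw [Finset.sum_add_distrib, Finset.sum_add_distrib, Finset.sum_const, Finset.card_univ,
    Fintype.card_fin, nsmul_eq_mul] at hsum
  have := mul_le_mul_of_nonneg_left hsum (inv_nonneg.mpr hn'.le)
  rw [mul_add, mul_add, inv_mul_cancel_left₀ hn'.ne'] at this
  exact this

/-- Descent lemma: one gradient step with the prescribed step size stays in the ball of radius
`R` and decreases the risk by at least half the step size times the squared gradient norm. -/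
lemma riskW_step_le [Unique (Fin (dim L))] (hn : 0 < n)
    (hzn : ∀ i, vecNorm (z i) ≤ 1)
    (hderiv : ∀ s, HasDerivAt ℓ (ℓ' s) s) {β G : ℝ} (hβ0 : 0 ≤ β) (hG0 : 0 < G)
    (hβ : ∀ a b, |ℓ' a - ℓ' b| ≤ β * |a - b|) (hG : ∀ a, |ℓ' a| ≤ G)
    (W W' : Layers dim) {R η : ℝ} (hR : 1 ≤ R) (hη0 : 0 ≤ η)
    (hη : η * (2 * (L : ℝ) ^ 2 * R ^ (2 * L - 2) * (β + G)) ≤ 1)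
    (hW : ∀ k < L, frobNorm (W k) ≤ R - 1)
    (hstep : ∀ k < L, W' k = W k - η • gradLayer L ℓ' z W k) :
    riskW L ℓ z W' ≤ riskW L ℓ z W - η / 2 * gradNormSq L ℓ' z W := by
  have hWR : ∀ k < L, frobNorm (W k) ≤ R := fun k hk => (hW k hk).trans (by linarith)
  have hV : ∀ k < L, W' k - W k = (-η) • gradLayer L ℓ' z W k := by
    intro k hk; rw [hstep k hk, neg_smul]; abel
  have hVn : ∀ k < L, frobNorm (W' k - W k) = η * frobNorm (gradLayer L ℓ' z W k) := by
    intro k hk; rw [hV k hk, frobNorm_smul, abs_neg, abs_of_nonneg hη0]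
  have hq : 1 ≤ R ^ (L - 1) := one_le_pow₀ hR
  have hpow : R ^ (2 * L - 2) = R ^ (L - 1) * R ^ (L - 1) := by
    rw [← pow_add]; congr 1; omega
  have hW'R : ∀ k < L, frobNorm (W' k) ≤ R := by
    intro k hk
    have hL' : (1 : ℝ) ≤ L := by exact_mod_cast (by omega : 1 ≤ L)
    have h1 : frobNorm (W' k - W k) ≤ 1 := by
      rw [hVn k hk]
      refine le_trans (mul_le_mul_of_nonneg_left ?_ hη0) hη
      refine (frobNorm_gradLayer_le hn hzn hG W (by linarith) hWR hk).trans ?_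
      rw [hpow]
      have hLL : (1 : ℝ) ≤ 2 * (L : ℝ) ^ 2 := by nlinarith
      calc R ^ (L - 1) * G ≤ R ^ (L - 1) * (β + G) := by gcongr; linarith
        _ = 1 * (R ^ (L - 1) * 1) * (β + G) := by ring
        _ ≤ 2 * (L : ℝ) ^ 2 * (R ^ (L - 1) * R ^ (L - 1)) * (β + G) := by gcongr
    have := frobNorm_add_le (W k) (W' k - W k)
    rw [add_sub_cancel] at this
    linarith [hW k hk]
  have key := riskW_le hn hzn hderiv hβ0 hβ hG W W' hR hWR hW'R
  have hlin : ∑ k ∈ Finset.range L, ∑ a, ∑ b, gradLayer L ℓ' z W k a b * (W' k - W k) a b =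
      -η * gradNormSq L ℓ' z W := by
    rw [gradNormSq, Finset.mul_sum]
    refine Finset.sum_congr rfl fun k hk => ?_
    rw [hV k (Finset.mem_range.mp hk), frobNorm_sq]
    simp only [Finset.mul_sum, Matrix.smul_apply, smul_eq_mul]
    refine Finset.sum_congr rfl fun a _ => Finset.sum_congr rfl fun b _ => ?_
    ring
  have hS : (∑ k ∈ Finset.range L, frobNorm (W' k - W k)) ^ 2 ≤
      (L : ℝ) * (η ^ 2 * gradNormSq L ℓ' z W) := by
    have := sq_sum_le_card_mul_sum_sq (s := Finset.range L)
      (f := fun k => frobNorm (W' k - W k))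
    rw [Finset.card_range] at this
    refine this.trans_eq ?_
    rw [gradNormSq, Finset.mul_sum (a := η ^ 2)]
    congr 1
    refine Finset.sum_congr rfl fun k hk => ?_
    rw [hVn k (Finset.mem_range.mp hk)]; ring
  have hN : 0 ≤ gradNormSq L ℓ' z W := Finset.sum_nonneg fun _ _ => sq_nonneg _
  have hLsq : (L : ℝ) ≤ (L : ℝ) ^ 2 := by exact_mod_cast Nat.le_self_pow two_ne_zero L
  have hrem : R ^ (2 * L - 2) * (β + G) * (∑ k ∈ Finset.range L, frobNorm (W' k - W k)) ^ 2 ≤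
      η / 2 * gradNormSq L ℓ' z W := by
    calc _ ≤ R ^ (2 * L - 2) * (β + G) * ((L : ℝ) ^ 2 * (η ^ 2 * gradNormSq L ℓ' z W)) := by
          refine mul_le_mul_of_nonneg_left (hS.trans ?_) (by positivity)
          gcongr
      _ = (η * (2 * (L : ℝ) ^ 2 * R ^ (2 * L - 2) * (β + G))) *
            (η / 2 * gradNormSq L ℓ' z W) := by ring
      _ ≤ 1 * (η / 2 * gradNormSq L ℓ' z W) := by gcongr
      _ = _ := one_mul _
  rw [hlin] at key
  linarith

/-- On a Frobenius ball, the gradient is bounded away from zero at parameters whose risk is at most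
a fixed `ρ < ℓ 0`. Some margin is at least `δ > 0`, so the product of the layers above the
first is not small; and `⟨u, -∇R(w)⟩` is bounded below because `-ℓ'` has a positive minimum on
the compact interval of possible margins. -/
lemma exists_gradNormSq_lower_bound [Unique (Fin (dim L))] (hL : 1 ≤ L) (hn : 0 < n)
    (hzn : ∀ i, vecNorm (z i) ≤ 1) {u : Fin (dim 0) → ℝ} (hu : vecNorm u = 1)
    (hsep : ∀ i, 0 < u ⬝ᵥ z i) (hanti : Antitone ℓ) (hcontℓ : Continuous ℓ)
    (hcont : Continuous ℓ') (hneg : ∀ s, ℓ' s < 0) {ρ : ℝ} (hρ : ρ < ℓ 0) {R : ℝ} (hR : 0 < R) :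
    ∃ ε > 0, ∀ W : Layers dim, (∀ k < L, frobNorm (W k) ≤ R) → riskW L ℓ z W ≤ ρ →
      ε ≤ gradNormSq L ℓ' z W := by
  have hn' : (0 : ℝ) < n := by exact_mod_cast hn
  have : Nonempty (Fin n) := ⟨⟨0, hn⟩⟩
  obtain ⟨δ, hδ, hδl⟩ : ∃ δ > 0, ∀ s, ℓ s ≤ ρ → δ ≤ s := by
    obtain ⟨δ, hδ, h⟩ := Metric.eventually_nhds_iff.mp
      (hcontℓ.continuousAt.eventually (lt_mem_nhds hρ))
    refine ⟨δ, hδ, fun s hs => ?_⟩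
    by_contra! hlt
    rcases le_or_gt s 0 with h0 | h0
    · linarith [hanti h0]
    · have := h (y := s) (by rw [Real.dist_eq, sub_zero, abs_of_pos h0]; exact hlt)
      linarith
  obtain ⟨m, hm, hml⟩ : ∃ m > 0, ∀ s, |s| ≤ R ^ L → m ≤ -ℓ' s := by
    obtain ⟨c, -, hc⟩ := (isCompact_Icc (a := -R ^ L) (b := R ^ L)).exists_isMinOn
      ⟨0, neg_nonpos.mpr (by positivity), by positivity⟩ (f := fun s => -ℓ' s) hcont.neg.continuousOn
    exact ⟨-ℓ' c, by linarith [hneg c], fun s hs => hc (abs_le.mp hs)⟩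
  obtain ⟨i₀, hi₀⟩ := Finite.exists_min fun i => u ⬝ᵥ z i
  set γ := u ⬝ᵥ z i₀
  have hγ : 0 < γ := hsep i₀
  refine ⟨(δ / R * (m * γ)) ^ 2, by positivity, fun W hW hrisk => ?_⟩
  have hZ : ∀ i, frobNorm (colMat (z i) : Matrix (Fin (dim 0)) (Fin (dim L)) ℝ) ≤ 1 :=
    fun i => by rw [frobNorm_colMat]; exact hzn i
  have hmargin : ∀ i, |wprod L W ⬝ᵥ z i| ≤ R ^ L := by
    intro i
    rw [wprod_dotProduct]
    refine (abs_trace_le_frobNorm _).trans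
      ((frobNorm_prodUpTo_mul_le W hR.le hW _ le_rfl).trans ?_)
    exact mul_le_of_le_one_right (by positivity) (hZ i)
  obtain ⟨i, hi⟩ : ∃ i, ℓ (wprod L W ⬝ᵥ z i) ≤ ρ := by
    by_contra! h
    have h1 := Finset.sum_lt_sum_of_nonempty (s := (Finset.univ : Finset (Fin n)))
      Finset.univ_nonempty fun i _ => h i
    rw [Finset.sum_const, Finset.card_univ, Fintype.card_fin, nsmul_eq_mul] at h1
    have h2 := mul_lt_mul_of_pos_left h1 (inv_pos.mpr hn')
    rw [inv_mul_cancel_left₀ hn'.ne'] at h2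
    exact absurd hrisk (not_le.mpr h2)
  have hP : δ / R ≤ frobNorm (prodFrom L W 1) := by
    rw [div_le_iff₀ hR]
    refine (hδl _ hi).trans ?_
    rw [wprod_dotProduct, ← prodFrom_mul_prodUpTo W hL]
    refine (le_abs_self _).trans ((abs_trace_le_frobNorm _).trans ?_)
    rw [Matrix.mul_assoc]
    refine (frobNorm_mul_le _ _).trans (mul_le_mul_of_nonneg_left ?_ (frobNorm_nonneg _))
    refine (frobNorm_prodUpTo_mul_le W hR.le hW _ hL).trans ?_
    rw [pow_one]
    exact mul_le_of_le_one_right hR.le (hZ i)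
  have hgu : m * γ ≤ |gradRiskV ℓ' z (wprod L W) ⬝ᵥ u| := by
    have e : -(gradRiskV ℓ' z (wprod L W) ⬝ᵥ u) =
        (n : ℝ)⁻¹ * ∑ i, -ℓ' (wprod L W ⬝ᵥ z i) * (u ⬝ᵥ z i) := by
      rw [gradRiskV, smul_dotProduct, sum_dotProduct, smul_eq_mul, ← mul_neg,
        ← Finset.sum_neg_distrib]
      congr 1
      refine Finset.sum_congr rfl fun i _ => ?_
      rw [smul_dotProduct, smul_eq_mul, dotProduct_comm (z i), neg_mul]
    refine le_trans ?_ (neg_le_abs _)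
    rw [e, ← div_eq_inv_mul, le_div_iff₀ hn']
    have := Finset.sum_le_sum (s := (Finset.univ : Finset (Fin n))) (f := fun _ => m * γ)
      fun i _ => mul_le_mul (hml _ (hmargin i)) (hi₀ i) hγ.le (by linarith [hneg (wprod L W ⬝ᵥ z i)])
    rw [Finset.sum_const, Finset.card_univ, Fintype.card_fin, nsmul_eq_mul] at this
    linarith
  -- Testing the bottom-layer gradient on `u` isolates the product of the upper layers.
  have hgrad : gradLayer L ℓ' z W 0 * (colMat u : Matrix _ (Fin (dim L)) ℝ) =
      (gradRiskV ℓ' z (wprod L W) ⬝ᵥ u) • (prodFrom L W 1)ᵀ := by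
    have e1 : (Matrix.of fun (_ : Fin (dim L)) (j : Fin (dim 0)) =>
        gradRiskV ℓ' z (wprod L W) j) * (colMat u : Matrix _ (Fin (dim L)) ℝ) =
        (gradRiskV ℓ' z (wprod L W) ⬝ᵥ u) • (1 : Matrix (Fin (dim L)) (Fin (dim L)) ℝ) := by
      ext a b
      rw [Subsingleton.elim b a]
      simp [Matrix.mul_apply, colMat, dotProduct]
    rw [gradLayer, prodUpTo, Matrix.transpose_one, Matrix.mul_one, Matrix.mul_assoc, e1,
      Matrix.mul_smul, Matrix.mul_one]
  have h0 : δ / R * (m * γ) ≤ frobNorm (gradLayer L ℓ' z W 0) := by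
    have h1 := frobNorm_mul_le (gradLayer L ℓ' z W 0) (colMat u : Matrix _ (Fin (dim L)) ℝ)
    rw [hgrad, frobNorm_smul, frobNorm_transpose, frobNorm_colMat, hu, mul_one] at h1
    refine le_trans ?_ h1
    rw [mul_comm]
    exact mul_le_mul hgu hP (by positivity) (abs_nonneg _)
  refine (pow_le_pow_left₀ (by positivity) h0 2).trans ?_
  exact Finset.single_le_sum (f := fun k => frobNorm (gradLayer L ℓ' z W k) ^ 2)
    (fun _ _ => sq_nonneg _) (Finset.mem_range.mpr hL)

end Risk

theorem stmt15
    (dim : ℕ → ℕ) (L n : ℕ) (hL : 1 ≤ L) (hdimL : dim L = 1) (hn : 0 < n)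
    (x : Fin n → Fin (dim 0) → ℝ) (y : Fin n → ℝ) (z : Fin n → Fin (dim 0) → ℝ)
    (hx : ∀ i, vecNorm (x i) ≤ 1) (hy : ∀ i, y i = 1 ∨ y i = -1)
    (hz : ∀ i, z i = y i • x i)
    (usep : Fin (dim 0) → ℝ) (husep_unit : vecNorm usep = 1)
    (husep : ∀ i, 0 < usep ⬝ᵥ z i)
    (ℓ ℓ' : ℝ → ℝ) (hderiv : ∀ s : ℝ, HasDerivAt ℓ (ℓ' s) s) (hcont : Continuous ℓ')
    (hneg : ∀ s : ℝ, ℓ' s < 0)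
    (hbot : Tendsto ℓ atBot atTop) (htop : Tendsto ℓ atTop (nhds 0))
    (β G : ℝ) (hβ : ∀ a b : ℝ, |ℓ' a - ℓ' b| ≤ β * |a - b|) (hG : ∀ a : ℝ, |ℓ' a| ≤ G)
    (W : ℕ → Layers dim) (η : ℕ → ℝ) (Rseq : ℕ → ℝ)
    (hGD : ∀ t : ℕ, ∀ k < L, W (t+1) k = W t k - η t • gradLayer L ℓ' z (W t) k)
    (hη : ∀ t, η t = min (2 * (L : ℝ)^2 * (Rseq t)^(2*L-2) * (β + G))⁻¹ 1)
    (hR1 : ∀ t, 1 ≤ Rseq t)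
    (hRt : ∀ t, ∀ k < L, frobNorm (W t k) ≤ Rseq t - 1)
    (hRmono : ∀ t, (∀ k < L, frobNorm (W (t+1) k) ≤ Rseq t - 1) → Rseq (t+1) = Rseq t)
    (hinit_grad : ∃ k < L, gradLayer L ℓ' z (W 0) k ≠ 0)
    (hinit_risk : riskW L ℓ z (W 0) ≤ ℓ 0)
    :
    (∀ C : ℝ, ∃ t : ℕ, ∃ k < L, C < frobNorm (W t k))
    ∧ Tendsto (fun T : ℕ => ∑ t ∈ Finset.range T, η t) atTop atTop
    ∧ (∀ R : ℝ, 0 < R →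
        Summable (Set.indicator {t : ℕ | ∀ k < L, frobNorm (W t k) ≤ R} η)) := by
  have : Unique (Fin (dim L)) := by rw [hdimL]; infer_instance
  have hzn : ∀ i, vecNorm (z i) ≤ 1 := by
    intro i
    have : vecNorm (z i) = vecNorm (x i) := by
      rcases hy i with h | h <;> simp [vecNorm, hz i, h]
    rw [this]; exact hx i
  have hβ0 : 0 ≤ β := by
    have := (abs_nonneg _).trans (hβ 1 0)
    simpa using this
  have hG0 : 0 < G := (abs_pos.mpr (hneg 0).ne).trans_le (hG 0)
  have hanti : Antitone ℓ :=
    antitone_of_hasDerivAt_nonpos hderiv fun s => (hneg s).le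
  have hcontℓ : Continuous ℓ :=
    continuous_iff_continuousAt.mpr fun s => (hderiv s).continuousAt
  have hℓ0 : ∀ s, 0 ≤ ℓ s := fun s => hanti.le_of_tendsto htop s
  have hrisk0 : ∀ V : Layers dim, 0 ≤ riskW L ℓ z V := fun V =>
    mul_nonneg (by positivity) (Finset.sum_nonneg fun i _ => hℓ0 _)
  have hL' : (0 : ℝ) < L := by exact_mod_cast hL
  have hbpos : ∀ R : ℝ, 1 ≤ R → 0 < 2 * (L : ℝ) ^ 2 * R ^ (2 * L - 2) * (β + G) := by
    intro R hR
    have : 0 < R := by linarith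
    positivity
  have hηpos : ∀ t, 0 < η t := fun t => by
    rw [hη t]; exact lt_min (inv_pos.mpr (hbpos _ (hR1 t))) one_pos
  have hdesc : ∀ t, riskW L ℓ z (W (t + 1)) ≤
      riskW L ℓ z (W t) - η t / 2 * gradNormSq L ℓ' z (W t) := by
    intro t
    refine riskW_step_le hn hzn hderiv hβ0 hG0 hβ hG (W t) (W (t + 1)) (hR1 t) (hηpos t).le ?_
      (hRt t) (hGD t)
    rw [← le_div_iff₀ (hbpos _ (hR1 t)), one_div, hη t]
    exact min_le_left _ _
  have hN : ∀ t, 0 ≤ gradNormSq L ℓ' z (W t) := fun t =>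
    Finset.sum_nonneg fun _ _ => sq_nonneg _
  have hηN : ∀ t, 0 ≤ η t * gradNormSq L ℓ' z (W t) := fun t =>
    mul_nonneg (hηpos t).le (hN t)
  have hmono : Antitone fun t => riskW L ℓ z (W t) :=
    antitone_nat_of_succ_le fun t => by linarith [hdesc t, hηN t]
  have hsumN : Summable fun t => η t * gradNormSq L ℓ' z (W t) := by
    refine summable_of_sum_range_le (c := 2 * riskW L ℓ z (W 0)) hηN fun T => ?_
    have : ∀ T, ∑ t ∈ Finset.range T, η t * gradNormSq L ℓ' z (W t) ≤
        2 * (riskW L ℓ z (W 0) - riskW L ℓ z (W T)) := by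
      intro T
      induction T with
      | zero => simp
      | succ T ih => rw [Finset.sum_range_succ]; linarith [hdesc T]
    linarith [this T, hrisk0 (W T)]
  -- The initial gradient is nonzero, so the first step brings the risk strictly below `ℓ 0`.
  have hrisk1 : riskW L ℓ z (W 1) < ℓ 0 := by
    obtain ⟨k, hk, hgk⟩ := hinit_grad
    have h1 : 0 < gradNormSq L ℓ' z (W 0) :=
      Finset.sum_pos' (fun _ _ => sq_nonneg _)
        ⟨k, Finset.mem_range.mpr hk, pow_pos (frobNorm_pos hgk) 2⟩
    have h2 := hdesc 0
    rw [zero_add] at h2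
    have := mul_pos (half_pos (hηpos 0)) h1
    linarith
  have hiii : ∀ R : ℝ, 0 < R →
      Summable (Set.indicator {t : ℕ | ∀ k < L, frobNorm (W t k) ≤ R} η) := by
    intro R hR
    obtain ⟨ε, hε, hlow⟩ := exists_gradNormSq_lower_bound hL hn hzn husep_unit husep hanti
      hcontℓ hcont hneg hrisk1 hR
    -- The time `t = 0` is excluded from the comparison, since its risk may equal `ℓ 0`.
    rw [← summable_nat_add_iff 1]
    refine Summable.of_nonneg_of_le (fun t => Set.indicator_nonneg (fun s _ => (hηpos s).le) _)
      (fun t => ?_) (((summable_nat_add_iff 1).mpr hsumN).mul_left ε⁻¹)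
    by_cases ht : t + 1 ∈ {t : ℕ | ∀ k < L, frobNorm (W t k) ≤ R}
    · rw [Set.indicator_of_mem ht, le_inv_mul_iff₀ hε, mul_comm]
      exact mul_le_mul_of_nonneg_left (hlow _ ht (hmono (by omega : 1 ≤ t + 1))) (hηpos _).le
    · rw [Set.indicator_of_notMem ht]
      exact mul_nonneg (by positivity) (hηN _)
  have hi : ∀ C : ℝ, ∃ t : ℕ, ∃ k < L, C < frobNorm (W t k) := by
    by_contra! h
    obtain ⟨C, hC⟩ := h
    -- Bounded iterates force `Rseq` to be bounded: it freezes as soon as it exceeds `C + 1`.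
    obtain ⟨B, hB1, hB⟩ : ∃ B : ℝ, 1 ≤ B ∧ ∀ t, Rseq t ≤ B := by
      by_cases hex : ∃ t, C + 1 ≤ Rseq t
      · obtain ⟨t₀, ht₀⟩ := hex
        have hconst : ∀ s, Rseq (t₀ + s) = Rseq t₀ := by
          intro s
          induction s with
          | zero => rfl
          | succ s ih =>
            rw [← add_assoc, hRmono (t₀ + s) fun k hk => ?_, ih]
            rw [ih]; linarith [hC (t₀ + s + 1) k hk]
        refine ⟨∑ t ∈ Finset.range (t₀ + 1), Rseq t, ?_, fun t => ?_⟩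
        · exact (hR1 0).trans (Finset.single_le_sum (f := Rseq)
            (fun s _ => by linarith [hR1 s]) (Finset.mem_range.mpr (by omega)))
        · have hle : ∀ s ≤ t₀, Rseq s ≤ ∑ t ∈ Finset.range (t₀ + 1), Rseq t := fun s hs =>
            Finset.single_le_sum (f := Rseq)
              (fun s _ => by linarith [hR1 s]) (Finset.mem_range.mpr (by omega))
          rcases le_total t t₀ with h | h
          · exact hle t h
          · obtain ⟨s, rfl⟩ := Nat.exists_eq_add_of_le h
            rw [hconst]; exact hle t₀ le_rfl
      · push Not at hex
        exact ⟨C + 1, (hR1 0).trans (hex 0).le, fun t => (hex t).le⟩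
    have hlow : ∀ t, min (2 * (L : ℝ) ^ 2 * B ^ (2 * L - 2) * (β + G))⁻¹ 1 ≤ η t := by
      intro t
      have hRp : 0 ≤ Rseq t := by linarith [hR1 t]
      rw [hη t]
      refine min_le_min_right _ (inv_anti₀ (hbpos _ (hR1 t)) ?_)
      gcongr
      exact hB t
    have hsum := hiii (max C 1) (by positivity)
    have hall : Set.indicator {t : ℕ | ∀ k < L, frobNorm (W t k) ≤ max C 1} η = η :=
      Set.indicator_eq_self.mpr fun t _ k hk => (hC t k hk).trans (le_max_left _ _)
    rw [hall] at hsum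
    exact absurd (ge_of_tendsto' hsum.tendsto_atTop_zero hlow)
      (not_le.mpr (lt_min (inv_pos.mpr (hbpos _ hB1)) one_pos))
  refine ⟨hi, ?_, hiii⟩
  rw [← not_summable_iff_tendsto_nat_atTop_of_nonneg fun t => (hηpos t).le]
  intro hsum
  -- Since `a ≤ 1 + a ^ 2`, the path length is dominated by the sum of `η + η * gradNormSq`.
  have htot := hsum.add hsumN
  have hpath : ∀ t, ∀ k < L, frobNorm (W t k) ≤ frobNorm (W 0 k) +
      ∑ s ∈ Finset.range t, (η s + η s * gradNormSq L ℓ' z (W s)) := by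
    intro t k hk
    induction t with
    | zero => simp
    | succ t ih =>
      have h1 : frobNorm (W (t + 1) k) ≤
          frobNorm (W t k) + η t * frobNorm (gradLayer L ℓ' z (W t) k) := by
        rw [hGD t k hk, sub_eq_add_neg, ← neg_smul]
        refine (frobNorm_add_le _ _).trans_eq ?_
        rw [frobNorm_smul, abs_neg, abs_of_pos (hηpos t)]
      have h2 : frobNorm (gradLayer L ℓ' z (W t) k) ^ 2 ≤ gradNormSq L ℓ' z (W t) :=
        Finset.single_le_sum (f := fun k => frobNorm (gradLayer L ℓ' z (W t) k) ^ 2)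
          (fun _ _ => sq_nonneg _) (Finset.mem_range.mpr hk)
      have h3 : frobNorm (gradLayer L ℓ' z (W t) k) ≤ 1 + gradNormSq L ℓ' z (W t) := by
        nlinarith [sq_nonneg (frobNorm (gradLayer L ℓ' z (W t) k) - 1)]
      have h4 := mul_le_mul_of_nonneg_left h3 (hηpos t).le
      rw [Finset.sum_range_succ]
      linarith
  obtain ⟨t, k, hk, hlt⟩ := hi (∑ k ∈ Finset.range L, frobNorm (W 0 k) +
    ∑' s, (η s + η s * gradNormSq L ℓ' z (W s)))
  have h1 := htot.sum_le_tsum (Finset.range t) fun s _ => add_nonneg (hηpos s).le (hηN s)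
  have h2 : frobNorm (W 0 k) ≤ ∑ k ∈ Finset.range L, frobNorm (W 0 k) :=
    Finset.single_le_sum (f := fun k => frobNorm (W 0 k)) (fun _ _ => frobNorm_nonneg _)
      (Finset.mem_range.mpr hk)
  linarith [hpath t k hk]

end
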